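/- Let λ, a, b, μ be real numbers with λ ≠ 0. Then the identity −2λ³(b + b²) − 16λ − 2λ(16 + a²λ²)·c₂(t)c₃(t) + 2λ³(ab − a)·c₁(t) = −16λ²μ·s₂(t)s₃(t) holds for every real t if and only if either (a = 0, b ∈ {0, −1}, and λμ = −2), or (b = 1, a ∈ {2, −2}, and λ² + 2μλ + 4 = 0); in the second case μ = −(λ² + 4)/(2λ). -/

import Mathlib

open Real

noncomputable def c (k : ℕ) (t : ℝ) : ℝ := Real.cos (t + 2 * Real.pi * ((k : ℝ) - 1) / 3)

noncomputable def s (k : ℕ) (t : ℝ) : ℝ := Real.sin (t + 2 * Real.pi * ((k : ℝ) - 1) / 3)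

/-!
Since `c 2 * c 3 + s 2 * s 3` is the constant `cos (2π / 3) = -1 / 2`, the identity is a linear
relation between `s 2 * s 3`, `c 1` and `1`. As functions of `cos t` these three are polynomials of
degree `2`, `1` and `0`, so they are linearly independent, and the relation holds exactly when
`l ^ 2 * a ^ 2 + 8 * (l * μ) + 16 = 0`, `a * (b - 1) = 0` and `a ^ 2 = 2 * (b * (b + 1))`. The last
two equations determine the pairs `(a, b)`, and the first then determines `μ`.
-/

theorem cos_two_pi_div_three : cos (2 * π / 3) = -1 / 2 := by
  rw [show 2 * π / 3 = π - π / 3 by ring, cos_pi_sub, cos_pi_div_three, neg_div]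

theorem forall_quadratic_cos_eq_zero_iff {p q r : ℝ} :
    (∀ t, p * cos t ^ 2 + q * cos t + r = 0) ↔ p = 0 ∧ q = 0 ∧ r = 0 := by
  constructor
  · intro h
    have at_one : p + q + r = 0 := by simpa using h 0
    have at_zero : r = 0 := by simpa using h (π / 2)
    have at_neg_one : p - q + r = 0 := by simpa [← sub_eq_add_neg] using h π
    refine ⟨?_, ?_, at_zero⟩ <;> linarith
  · rintro ⟨rfl, rfl, rfl⟩ t
    ring

theorem c_one (t : ℝ) : c 1 t = cos t := by
  simp [c]

theorem c_mul_c_add_s_mul_s (j k : ℕ) (t : ℝ) :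
    c j t * c k t + s j t * s k t = cos (2 * π * ((j : ℝ) - k) / 3) := by
  rw [c, c, s, s, ← cos_sub]
  ring_nf

theorem c_mul_c_sub_s_mul_s (j k : ℕ) (t : ℝ) :
    c j t * c k t - s j t * s k t = cos (2 * t + 2 * π * ((j : ℝ) + k - 2) / 3) := by
  rw [c, c, s, s, ← cos_add]
  ring_nf

theorem c_two_mul_c_three (t : ℝ) : c 2 t * c 3 t = -1 / 2 - s 2 t * s 3 t := by
  rw [eq_sub_iff_add_eq, c_mul_c_add_s_mul_s, ← cos_two_pi_div_three, ← cos_neg]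
  congr 1
  push_cast
  ring

theorem s_two_mul_s_three (t : ℝ) : s 2 t * s 3 t = 1 / 4 - cos t ^ 2 := by
  have cos_sum : c 2 t * c 3 t - s 2 t * s 3 t = 2 * cos t ^ 2 - 1 := by
    rw [c_mul_c_sub_s_mul_s, ← cos_two_mul, ← cos_add_two_pi (2 * t)]
    congr 1
    push_cast
    ring
  linear_combination (c_two_mul_c_three t - cos_sum) / 2

theorem forall_s_mul_s_add_c_add_const_eq_zero_iff {p q r : ℝ} :
    (∀ t, p * (s 2 t * s 3 t) + q * c 1 t + r = 0) ↔ p = 0 ∧ q = 0 ∧ r = 0 := by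
  have quadratic (t : ℝ) : p * (s 2 t * s 3 t) + q * c 1 t + r
      = -p * cos t ^ 2 + q * cos t + (r + p / 4) := by
    rw [s_two_mul_s_three, c_one]
    ring
  simp only [quadratic, forall_quadratic_cos_eq_zero_iff, neg_eq_zero]
  refine and_congr_right fun hp => ?_
  rw [hp, zero_div, add_zero]

section NoZeroDivisors

variable {R : Type*} [CommRing R] [NoZeroDivisors R] [NeZero (2 : R)] {l a b μ : R}

theorem mul_sub_one_eq_zero_and_sq_eq_iff :
    a * (b - 1) = 0 ∧ a ^ 2 = 2 * (b * (b + 1)) ↔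
      (a = 0 ∧ (b = 0 ∨ b = -1)) ∨ (b = 1 ∧ (a = 2 ∨ a = -2)) := by
  constructor
  · rintro ⟨hab, hsq⟩
    rcases mul_eq_zero.mp hab with rfl | hb
    · have hb : b * (b + 1) = 0 := by simpa [two_ne_zero] using hsq.symm
      exact .inl ⟨rfl, (mul_eq_zero.mp hb).imp_right eq_neg_of_add_eq_zero_left⟩
    · obtain rfl : b = 1 := sub_eq_zero.mp hb
      have ha : a ^ 2 = 2 ^ 2 := by linear_combination hsq
      exact .inr ⟨rfl, sq_eq_sq_iff_eq_or_eq_neg.mp ha⟩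
  · rintro (⟨rfl, rfl | rfl⟩ | ⟨rfl, rfl | rfl⟩) <;> constructor <;> ring

theorem coefficients_eq_zero_iff :
    l ^ 2 * a ^ 2 + 8 * (l * μ) + 16 = 0 ∧ a * (b - 1) = 0 ∧ a ^ 2 = 2 * (b * (b + 1)) ↔
      (a = 0 ∧ (b = 0 ∨ b = -1) ∧ l * μ = -2) ∨
      (b = 1 ∧ (a = 2 ∨ a = -2) ∧ l ^ 2 + 2 * μ * l + 4 = 0) := by
  have of_zero (ha : a = 0) : l ^ 2 * a ^ 2 + 8 * (l * μ) + 16 = 0 ↔ l * μ = -2 := by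
    have factor : l ^ 2 * a ^ 2 + 8 * (l * μ) + 16 = 2 ^ 3 * (l * μ + 2) := by
      rw [ha]
      ring
    rw [factor, mul_eq_zero_iff_left (pow_ne_zero 3 two_ne_zero), add_eq_zero_iff_eq_neg]
  have of_two (ha : a = 2 ∨ a = -2) :
      l ^ 2 * a ^ 2 + 8 * (l * μ) + 16 = 0 ↔ l ^ 2 + 2 * μ * l + 4 = 0 := by
    have factor : l ^ 2 * a ^ 2 + 8 * (l * μ) + 16 = 2 ^ 2 * (l ^ 2 + 2 * μ * l + 4) := by
      rw [sq_eq_sq_iff_eq_or_eq_neg.mpr ha]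
      ring
    rw [factor, mul_eq_zero_iff_left (pow_ne_zero 2 two_ne_zero)]
  rw [mul_sub_one_eq_zero_and_sq_eq_iff]
  tauto

end NoZeroDivisors

theorem sq_add_two_mul_mul_add_eq_zero_iff {K : Type*} [Field K] [NeZero (2 : K)] {l μ k : K}
    (hl : l ≠ 0) : l ^ 2 + 2 * μ * l + k = 0 ↔ μ = -((l ^ 2 + k) / (2 * l)) := by
  rw [← neg_div, eq_div_iff (mul_ne_zero two_ne_zero hl)]
  constructor <;> intro h <;> linear_combination h

theorem nearly_half_flat_classification (l a b μ : ℝ) (hl : l ≠ 0) :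
    (∀ t : ℝ,
        -2 * l ^ 3 * (b + b ^ 2) - 16 * l - 2 * l * (16 + a ^ 2 * l ^ 2) * (c 2 t * c 3 t)
            + 2 * l ^ 3 * (a * b - a) * c 1 t
          = -(16 * l ^ 2 * μ) * (s 2 t * s 3 t)) ↔
      (a = 0 ∧ (b = 0 ∨ b = -1) ∧ l * μ = -2) ∨
      (b = 1 ∧ (a = 2 ∨ a = -2) ∧ l ^ 2 + 2 * μ * l + 4 = 0 ∧ μ = -((l ^ 2 + 4) / (2 * l))) := by
  have residual (t : ℝ) :
      -2 * l ^ 3 * (b + b ^ 2) - 16 * l - 2 * l * (16 + a ^ 2 * l ^ 2) * (c 2 t * c 3 t)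
          + 2 * l ^ 3 * (a * b - a) * c 1 t - -(16 * l ^ 2 * μ) * (s 2 t * s 3 t)
        = 2 * l * (l ^ 2 * a ^ 2 + 8 * (l * μ) + 16) * (s 2 t * s 3 t)
          + 2 * l ^ 3 * (a * (b - 1)) * c 1 t + l ^ 3 * (a ^ 2 - 2 * (b * (b + 1))) := by
    rw [c_two_mul_c_three]
    ring
  calc
    _ ↔ l ^ 2 * a ^ 2 + 8 * (l * μ) + 16 = 0 ∧ a * (b - 1) = 0 ∧ a ^ 2 = 2 * (b * (b + 1)) := by
      simp_rw [← sub_eq_zero (b := -(16 * l ^ 2 * μ) * _), residual,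
        forall_s_mul_s_add_c_add_const_eq_zero_iff]
      simp [hl, sub_eq_zero]
    _ ↔ _ := by
      rw [coefficients_eq_zero_iff, ← sq_add_two_mul_mul_add_eq_zero_iff hl, and_self]
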